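/- arXiv:2503.08129 — 8 statements merged into one kernel-verified Lean document; each statement's English description precedes it below -/
import Mathlib

section
/- Let n ≥ 2, let L be a real n×n matrix with L·1ₙ = 0ₙ, and let Q be a coordination matrix of size n. If λ ∈ ℂ and x ∈ ℂⁿ satisfy L·x = λ·x (where L acts on ℂⁿ via its complexification), then (Q·L·Qᵀ)·(Q·x) = λ·(Q·x); moreover Q·x = 0 only if x is a scalar multiple of 1ₙ. -/
/-!
Adjoin to the rows of `Q` the all-ones row, and to the columns of `Qᵀ` the column with all entries
`1/n`. The two resulting square matrices multiply to the identity in one order, hence in the other,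
which reads `Qᵀ Q + J/n = 1` with `J` the all-ones matrix. Applied to a vector, this says that `Qᵀ Q`
subtracts the mean. Since `L` kills constants, `Q L Qᵀ Q = Q L`, which gives the eigenpair; and if
`Q x = 0`, then `x` equals its own mean in every coordinate.
-/

/-- A coordination matrix satisfies `Qᵀ Q + J/n = 1`: its rows together with the normalized all-ones
vector form an orthonormal basis. -/
theorem coordination_transpose_mul_self (n : ℕ) (hn : 2 ≤ n)
    (Q : Matrix (Fin (n - 1)) (Fin n) ℝ)
    (hQ1 : Q.mulVec (fun _ => (1 : ℝ)) = 0)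
    (hQ2 : Q * Q.transpose = 1) :
    Q.transpose * Q + Matrix.of (fun _ _ => (n : ℝ)⁻¹) = 1 := by
  have hn0 : (n : ℝ) ≠ 0 := by positivity
  have hrow : ∀ i, ∑ j, Q i j = 0 := fun i => by
    simpa [Matrix.mulVec, dotProduct] using congrFun hQ1 i
  have h1 : Matrix.fromRows Q (Matrix.of fun (_ : Unit) (_ : Fin n) => (1 : ℝ)) *
      Matrix.fromCols Q.transpose (Matrix.of fun (_ : Fin n) (_ : Unit) => (n : ℝ)⁻¹) = 1 := by
    rw [Matrix.fromRows_mul_fromCols, ← Matrix.fromBlocks_one, hQ2]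
    congr 1
    · ext i j
      simp [Matrix.mul_apply, ← Finset.sum_mul, hrow]
    · ext i j
      simp [Matrix.mul_apply, hrow]
    · ext i j
      simp [Matrix.mul_apply, hn0]
  have hcard : Fintype.card (Fin n) = Fintype.card (Fin (n - 1) ⊕ Unit) := by
    simp
    omega
  rw [← Matrix.fromCols_mul_fromRows_eq_one_comm (Fintype.equivOfCardEq hcard),
    Matrix.fromCols_mul_fromRows] at h1
  rw [← h1]
  congr 1
  ext i j
  simp [Matrix.mul_apply]


/-- If `L · 1ₙ = 0` and `Q` is a coordination matrix, then every
eigenpair `(λ, x)` of (the complexification of) `L` yields the eigenpair `(λ, Q x)` of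
`L̄ = Q L Qᵀ`; moreover `Q x = 0` only if `x` is a scalar multiple of `1ₙ`. -/
theorem eigenpair_transfer_to_reduced_laplacian (n : ℕ) (hn : 2 ≤ n)
    (L : Matrix (Fin n) (Fin n) ℝ)
    (hL : L.mulVec (fun _ => (1 : ℝ)) = 0)
    (Q : Matrix (Fin (n - 1)) (Fin n) ℝ)
    (hQ1 : Q.mulVec (fun _ => (1 : ℝ)) = 0)
    (hQ2 : Q * Q.transpose = 1)
    (μ : ℂ) (x : Fin n → ℂ)
    (hx : (L.map (algebraMap ℝ ℂ)).mulVec x = μ • x) :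
    ((Q * L * Q.transpose).map (algebraMap ℝ ℂ)).mulVec
        ((Q.map (algebraMap ℝ ℂ)).mulVec x)
      = μ • (Q.map (algebraMap ℝ ℂ)).mulVec x ∧
    ((Q.map (algebraMap ℝ ℂ)).mulVec x = 0 → ∃ c : ℂ, x = c • (fun _ => (1 : ℂ))) := by
  have hP := coordination_transpose_mul_self n hn Q hQ1 hQ2
  have hLrow : ∀ i, ∑ j, L i j = 0 := fun i => by
    simpa [Matrix.mulVec, dotProduct] using congrFun hL i
  have hLJ : L * Matrix.of (fun _ _ : Fin n => (n : ℝ)⁻¹) = 0 := by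
    ext i j
    simp [Matrix.mul_apply, ← Finset.sum_mul, hLrow]
  have hLP : Q * L * Q.transpose * Q = Q * L := by
    rw [Matrix.mul_assoc, eq_sub_of_add_eq hP, Matrix.mul_sub, Matrix.mul_assoc, Matrix.mul_assoc,
      hLJ]
    simp
  constructor
  · rw [Matrix.mulVec_mulVec, ← Matrix.map_mul, hLP, Matrix.map_mul, ← Matrix.mulVec_mulVec, hx,
      Matrix.mulVec_smul]
  · intro h
    refine ⟨(n : ℂ)⁻¹ * ∑ j, x j, ?_⟩
    have hPx := congrArg (fun M => (M.map (algebraMap ℝ ℂ)).mulVec x) hP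
    simp only [Matrix.map_add _ (map_add (algebraMap ℝ ℂ)), Matrix.map_mul, Matrix.add_mulVec,
      ← Matrix.mulVec_mulVec, h, Matrix.mulVec_zero, zero_add,
      Matrix.map_one _ (map_zero (algebraMap ℝ ℂ)) (map_one (algebraMap ℝ ℂ)),
      Matrix.one_mulVec] at hPx
    ext i
    have hi := congrFun hPx i
    simpa [Matrix.mulVec, dotProduct, ← Finset.mul_sum] using hi.symm
end

section
/- Let n ≥ 2, let L be a real n×n matrix with L·1ₙ = 0ₙ, and let Q be a coordination matrix of size n. Then the characteristic polynomial of L factors as charpoly(L) = X · charpoly(Q·L·Qᵀ). Equivalently, the spectrum of L̄ := Q·L·Qᵀ (with algebraic multiplicities) equals the spectrum of L with one copy of the eigenvalue 0 (corresponding to the eigenvector 1ₙ) removed. -/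
/-!
Stacking the row `1ₙᵀ` below `Q` gives a square matrix with right inverse `[Qᵀ, n⁻¹ • 1ₙ]`.
For square matrices this is also a left inverse, so `Qᵀ Q + n⁻¹ • 1ₙ 1ₙᵀ = 1`, and multiplying
by `L` on the left gives `L = (L Qᵀ) Q`. The result is then the comparison of the characteristic
polynomials of `A B` and `B A` for the rectangular matrices `A = L Qᵀ` and `B = Q`.
-/

open Matrix in
/-- `Qᵀ Q` is the orthogonal projection along `1ₙ`, so it is absorbed by a
matrix that kills `1ₙ`. -/
theorem mul_transpose_mul_self_of_coordination (n : ℕ) (hn : 1 ≤ n)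
    (L : Matrix (Fin n) (Fin n) ℝ)
    (hL : L *ᵥ (fun _ => (1 : ℝ)) = 0)
    (Q : Matrix (Fin (n - 1)) (Fin n) ℝ)
    (hQ1 : Q *ᵥ (fun _ => (1 : ℝ)) = 0)
    (hQ2 : Q * Qᵀ = 1) :
    L * Qᵀ * Q = L := by
  let u : Matrix (Fin n) Unit ℝ := replicateCol Unit fun _ => 1
  have hLu : L * u = 0 := by
    rw [← replicateCol_mulVec, hL]; rfl
  have hQu : Q * u = 0 := by
    rw [← replicateCol_mulVec, hQ1]; rfl
  have huQ : uᵀ * Qᵀ = 0 := by rw [← transpose_mul, hQu, transpose_zero]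
  have hn0 : (n : ℝ) ≠ 0 := by exact_mod_cast (by omega : n ≠ 0)
  have huu : uᵀ * ((n : ℝ)⁻¹ • u) = 1 := by
    ext i j
    simp [u, mul_apply, hn0]
  have hright : fromRows Q uᵀ * fromCols Qᵀ ((n : ℝ)⁻¹ • u) = 1 := by
    rw [fromRows_mul_fromCols, hQ2, huQ, huu, Matrix.mul_smul, hQu, smul_zero, fromBlocks_one]
  have hcard : Fintype.card (Fin (n - 1) ⊕ Unit) = Fintype.card (Fin n) := by
    simp; omega
  have hleft := (mul_eq_one_comm_of_card_eq _ _ ℝ (eq := hcard)).1 hright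
  rw [fromCols_mul_fromRows] at hleft
  calc L * Qᵀ * Q = L * (Qᵀ * Q + ((n : ℝ)⁻¹ • u) * uᵀ) := by
        rw [Matrix.mul_add, ← Matrix.mul_assoc, ← Matrix.mul_assoc, Matrix.mul_smul, hLu,
          smul_zero, Matrix.zero_mul, add_zero]
    _ = L := by rw [hleft, Matrix.mul_one]


/-- If `L · 1ₙ = 0` and `Q` is a coordination matrix, then
`charpoly(L) = X · charpoly(Q L Qᵀ)`: the spectrum of `L̄ = Q L Qᵀ` equals the spectrum
of `L` with one copy of the eigenvalue `0` removed. -/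
theorem charpoly_factorization_reduced_laplacian (n : ℕ) (hn : 2 ≤ n)
    (L : Matrix (Fin n) (Fin n) ℝ)
    (hL : L.mulVec (fun _ => (1 : ℝ)) = 0)
    (Q : Matrix (Fin (n - 1)) (Fin n) ℝ)
    (hQ1 : Q.mulVec (fun _ => (1 : ℝ)) = 0)
    (hQ2 : Q * Q.transpose = 1) :
    L.charpoly = Polynomial.X * (Q * L * Q.transpose).charpoly := by
  have h := Matrix.charpoly_mul_comm_of_le (L * Q.transpose) Q (by simp)
  have hc : n - (n - 1) = 1 := by omega
  rwa [mul_transpose_mul_self_of_coordination n (by omega) L hL Q hQ1 hQ2, Fintype.card_fin,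
    Fintype.card_fin, hc, pow_one, ← Matrix.mul_assoc] at h
end

section
/- Let n ≥ 2, let L be a real n×n matrix with L·1ₙ = 0ₙ, and let Q be a coordination matrix of size n. Then every complex eigenvalue of L̄ := Q·L·Qᵀ is a complex eigenvalue of L. -/
/-!
The rows of `Q` together with the normalised all-ones vector form an orthonormal basis, so
`QᵀQ` is the projection `1 - (1/n) 11ᵀ` along the kernel direction `1ₙ` of `L`
(`coordination_completion`), and therefore `L Qᵀ Q = L`. The matrices `Q (L Qᵀ)` and
`(L Qᵀ) Q = L` are products of the same two factors in opposite order, so their characteristic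
polynomials agree up to a power of `X`: `charpoly L = X * charpoly (Q L Qᵀ)`.
-/

/-- The resolution of the identity attached to a coordination matrix. Stacking the row `1ₙᵀ`
under `Q` gives a square matrix with right inverse `[Qᵀ | (1/n) 1ₙ]`; being square, this is also
a left inverse, which is the assertion. -/
theorem coordination_completion (n : ℕ) (hn : 1 ≤ n)
    (Q : Matrix (Fin (n - 1)) (Fin n) ℝ)
    (hQ1 : Q.mulVec (fun _ => (1 : ℝ)) = 0)
    (hQ2 : Q * Q.transpose = 1) :
    Q.transpose * Q + Matrix.of (fun _ _ : Fin n => (n : ℝ)⁻¹) = 1 := by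
  have hn0 : (n : ℝ) ≠ 0 := by positivity
  have hrow : ∀ i, ∑ j, Q i j = 0 := fun i => by
    simpa [Matrix.mulVec, dotProduct] using congrFun hQ1 i
  let e : Matrix (Fin 1) (Fin n) ℝ := Matrix.of fun _ _ => 1
  let f : Matrix (Fin n) (Fin 1) ℝ := Matrix.of fun _ _ => (n : ℝ)⁻¹
  have h12 : Q * f = 0 := by
    ext i j
    simp [f, Matrix.mul_apply, ← Finset.sum_mul, hrow]
  have h21 : e * Q.transpose = 0 := by
    ext i j
    simp [e, Matrix.mul_apply, hrow]
  have h22 : e * f = 1 := by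
    ext i j
    simp [e, f, Matrix.mul_apply, Matrix.one_apply, Subsingleton.elim i j, hn0]
  have h : Matrix.fromRows Q e * Matrix.fromCols Q.transpose f = 1 := by
    rw [Matrix.fromRows_mul_fromCols, hQ2, h12, h21, h22, Matrix.fromBlocks_one]
  have hfe : f * e = Matrix.of (fun _ _ : Fin n => (n : ℝ)⁻¹) := by
    ext i j
    simp [e, f, Matrix.mul_apply]
  rw [Matrix.mul_eq_one_comm_of_card_eq _ _ _ (by simp; omega),
    Matrix.fromCols_mul_fromRows, hfe] at h
  exact h

/-- If `L · 1ₙ = 0` and `Q` is a coordination matrix, then every complex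
eigenvalue of `L̄ = Q L Qᵀ` (root of its characteristic polynomial in `ℂ`) is a complex
eigenvalue of `L`. -/
theorem eigenvalues_reduced_subset (n : ℕ) (hn : 2 ≤ n)
    (L : Matrix (Fin n) (Fin n) ℝ)
    (hL : L.mulVec (fun _ => (1 : ℝ)) = 0)
    (Q : Matrix (Fin (n - 1)) (Fin n) ℝ)
    (hQ1 : Q.mulVec (fun _ => (1 : ℝ)) = 0)
    (hQ2 : Q * Q.transpose = 1) :
    ∀ μ : ℂ, Polynomial.aeval μ (Q * L * Q.transpose).charpoly = 0 →
      Polynomial.aeval μ L.charpoly = 0 := by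
  intro μ hμ
  have hLQ : L * Q.transpose * Q = L := by
    have h0 : L * Matrix.of (fun _ _ : Fin n => (n : ℝ)⁻¹) = 0 := by
      ext i j
      have := congrFun hL i
      simp only [Matrix.mulVec, dotProduct, mul_one, Pi.zero_apply] at this
      simp [Matrix.mul_apply, ← Finset.sum_mul, this]
    have h := congrArg (L * ·) (coordination_completion n (by omega) Q hQ1 hQ2)
    simpa [Matrix.mul_add, h0, Matrix.mul_assoc] using h
  have h := Matrix.charpoly_mul_comm_of_le (L * Q.transpose) Q (by simp)
  rw [hLQ, ← Matrix.mul_assoc] at h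
  rw [h, map_mul, hμ, mul_zero]
end

section
/- Let n ≥ 2 and let 𝒜 be a real n×n matrix with 𝒜ᵢᵢ = 0 and 𝒜ᵢⱼ ∈ {0,1} for all i, j. Let L = Δ − 𝒜 be the associated Laplacian, where Δ is the diagonal matrix with Δᵢᵢ = Σ_{j≠i} 𝒜ᵢⱼ. Suppose the digraph of 𝒜 contains a directed spanning tree, i.e., there exists a root node r such that for every node i there is a sequence i = i₀, i₁, …, i_s = r with 𝒜_{i_k, i_{k+1}} = 1 for each k. Then 0 is a root of the characteristic polynomial of L with algebraic multiplicity exactly one (with eigenvector 1ₙ, since L·1ₙ = 0), and every other complex root of the characteristic polynomial of L has strictly positive real part. -/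
/-!
The kernel of `L` is controlled by a discrete maximum principle, using
`(L v) i = ∑ j, 𝒜 i j * (v i - v j)`. If `L v ≤ 0` everywhere, the maximum of `v` propagates along
edges and is therefore attained at the root `r` (`le_root_of_subharmonic`). Applied to `v` and
`-v`, this shows that `L v = c • 1` forces `c = 0` and `v` constant
(`eq_const_of_laplacian_const`). Hence `ker L` is spanned by `1ₙ`, and since `1ₙ` is not in the
range of `L`, `ker L ^ k = ker L` for every `k ≥ 1`: the generalized eigenspace of `0`, whose
dimension is the algebraic multiplicity, is a line.

For the remaining roots, Gershgorin's theorem puts every eigenvalue `μ` in a disc `‖μ - d‖ ≤ d`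
with `d ≥ 0` a row sum of `𝒜`, i.e. `‖μ‖² ≤ 2 d Re μ`, so `μ ≠ 0` gives `Re μ > 0`.
-/

lemma laplacian_mulVec_apply {n : ℕ} (A : Matrix (Fin n) (Fin n) ℝ) (hdiag : ∀ i, A i i = 0)
    (v : Fin n → ℝ) (i : Fin n) :
    (Matrix.diagonal (fun i => ∑ j ∈ Finset.univ.erase i, A i j) - A).mulVec v i =
      ∑ j, A i j * (v i - v j) := by
  rw [Matrix.sub_mulVec, Pi.sub_apply, Matrix.mulVec_diagonal,
    Finset.sum_erase _ (hdiag i), Matrix.mulVec, dotProduct, Finset.sum_mul,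
    ← Finset.sum_sub_distrib]
  exact Finset.sum_congr rfl fun j _ => by ring

/-- Maximum principle: a subharmonic function attains its maximum at the root, because at a
maximum point `i` all terms of the sum are nonnegative, so that each of them vanishes and every
`j` with `A i j = 1` is a maximum point too. -/
lemma le_root_of_subharmonic {n : ℕ} (A : Matrix (Fin n) (Fin n) ℝ)
    (hA : ∀ i j, 0 ≤ A i j) (r : Fin n)
    (hr : ∀ i : Fin n, ∃ s : ℕ, ∃ p : ℕ → Fin n,
      p 0 = i ∧ p s = r ∧ ∀ k < s, A (p k) (p (k + 1)) = 1)
    (v : Fin n → ℝ) (hv : ∀ i, ∑ j, A i j * (v i - v j) ≤ 0) (i : Fin n) : v i ≤ v r := by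
  have : Nonempty (Fin n) := ⟨r⟩
  obtain ⟨m, hm⟩ := Finite.exists_max v
  obtain ⟨s, p, h0, hs, hp⟩ := hr m
  have key : ∀ k ≤ s, v (p k) = v m := by
    intro k
    induction k with
    | zero => intro _; rw [h0]
    | succ k ih =>
      intro hk
      have hk' := ih (by omega)
      have hnn : ∀ j ∈ Finset.univ, 0 ≤ A (p k) j * (v (p k) - v j) := fun j _ =>
        mul_nonneg (hA _ _) (by rw [hk']; exact sub_nonneg.2 (hm j))
      have hz := (Finset.sum_eq_zero_iff_of_nonneg hnn).1
        (le_antisymm (hv _) (Finset.sum_nonneg hnn)) (p (k + 1)) (Finset.mem_univ _)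
      rw [hp k (by omega)] at hz
      linarith
  rw [← hs, key s le_rfl]
  exact hm i

/-- The only constant function in the range of the Laplacian is `0`, and the kernel consists of
constant functions. -/
lemma eq_const_of_laplacian_const {n : ℕ} (A : Matrix (Fin n) (Fin n) ℝ)
    (hA : ∀ i j, 0 ≤ A i j) (r : Fin n)
    (hr : ∀ i : Fin n, ∃ s : ℕ, ∃ p : ℕ → Fin n,
      p 0 = i ∧ p s = r ∧ ∀ k < s, A (p k) (p (k + 1)) = 1)
    (v : Fin n → ℝ) (c : ℝ) (hv : ∀ i, ∑ j, A i j * (v i - v j) = c) :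
    c = 0 ∧ ∀ i, v i = v r := by
  -- If `c ≤ 0` then `v` is maximal at `r`, so row `r` of the Laplacian gives `0 ≤ c`.
  have aux : ∀ (w : Fin n → ℝ) (d : ℝ), (∀ i, ∑ j, A i j * (w i - w j) = d) → d ≤ 0 →
      d = 0 ∧ ∀ i, w i ≤ w r := by
    intro w d hw hd
    have hle := le_root_of_subharmonic A hA r hr w (fun i => (hw i).le.trans hd)
    refine ⟨le_antisymm hd ?_, hle⟩
    rw [← hw r]
    exact Finset.sum_nonneg fun j _ => mul_nonneg (hA _ _) (sub_nonneg.2 (hle j))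
  have hneg : ∀ i, ∑ j, A i j * ((-v) i - (-v) j) = -c := by
    intro i
    rw [← hv i, ← Finset.sum_neg_distrib]
    exact Finset.sum_congr rfl fun j _ => by simp only [Pi.neg_apply]; ring
  have hc : c = 0 := by
    rcases le_total c 0 with h | h
    · exact (aux v c hv h).1
    · linarith [(aux (-v) (-c) hneg (by linarith)).1]
  refine ⟨hc, fun i => le_antisymm ((aux v c hv hc.le).2 i) ?_⟩
  have := (aux (-v) (-c) hneg (by linarith)).2 i
  simpa using this

/-- If `D v ∈ span {e}` forces both `D v = 0` and `v ∈ span {e}`, and `D e = 0`, then the chain of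
kernels of powers of `D` stabilizes at `span {e}`. -/
lemma maxGenEigenspace_zero_eq_span {V : Type*} [AddCommGroup V] [Module ℝ V]
    (D : Module.End ℝ V) (e : V) (he : D e = 0)
    (h : ∀ v, ∀ c : ℝ, D v = c • e → D v = 0 ∧ v ∈ Submodule.span ℝ {e}) :
    D.maxGenEigenspace 0 = Submodule.span ℝ {e} := by
  have hpow : ∀ k : ℕ, ∀ v, (D ^ k) v = 0 → v ∈ Submodule.span ℝ {e} := by
    intro k
    induction k with
    | zero => intro v hv; simp at hv; simp [hv]
    | succ k ih =>
      intro v hv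
      rw [pow_succ, Module.End.mul_apply] at hv
      obtain ⟨c, hc⟩ := Submodule.mem_span_singleton.1 (ih _ hv)
      exact (h v c hc.symm).2
  ext v
  rw [Module.End.mem_maxGenEigenspace]
  constructor
  · rintro ⟨k, hk⟩
    rw [zero_smul, sub_zero] at hk
    exact hpow k v hk
  · intro hv
    obtain ⟨c, rfl⟩ := Submodule.mem_span_singleton.1 hv
    exact ⟨1, by simp [he]⟩

lemma re_pos_of_norm_sub_le {μ : ℂ} {d : ℝ} (hμ : μ ≠ 0) (hd : 0 ≤ d)
    (h : ‖μ - (d : ℂ)‖ ≤ d) : 0 < μ.re := by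
  have h1 : Complex.normSq (μ - (d : ℂ)) ≤ d ^ 2 := by
    rw [Complex.normSq_eq_norm_sq]; gcongr
  have h2 : 0 < Complex.normSq μ := Complex.normSq_pos.2 hμ
  simp only [Complex.normSq_apply, Complex.sub_re, Complex.sub_im, Complex.ofReal_re,
    Complex.ofReal_im] at h1 h2
  by_contra! hn
  nlinarith [mul_nonneg hd (neg_nonneg.2 hn)]


/-- If the digraph of the adjacency matrix `𝒜` contains a directed
spanning tree, then `0` is a root of the characteristic polynomial of the Laplacian
`L = Δ - 𝒜` with algebraic multiplicity exactly one (with eigenvector `1ₙ`, since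
`L · 1ₙ = 0`), and every other complex root has strictly positive real part. -/
theorem laplacian_spectrum_of_spanning_tree (n : ℕ) (hn : 2 ≤ n)
    (A : Matrix (Fin n) (Fin n) ℝ)
    (hdiag : ∀ i, A i i = 0)
    (hentries : ∀ i j, A i j = 0 ∨ A i j = 1)
    (htree : ∃ r : Fin n, ∀ i : Fin n, ∃ s : ℕ, ∃ p : ℕ → Fin n,
      p 0 = i ∧ p s = r ∧ ∀ k < s, A (p k) (p (k + 1)) = 1)
    (L : Matrix (Fin n) (Fin n) ℝ)
    (hLdef : L = Matrix.diagonal (fun i => ∑ j ∈ Finset.univ.erase i, A i j) - A) :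
    L.mulVec (fun _ => (1 : ℝ)) = 0 ∧
    Polynomial.rootMultiplicity (0 : ℂ) (L.charpoly.map (algebraMap ℝ ℂ)) = 1 ∧
    ∀ μ : ℂ, Polynomial.aeval μ L.charpoly = 0 → μ ≠ 0 → 0 < μ.re := by
 
  obtain ⟨r, hr⟩ := htree
  have hA : ∀ i j, 0 ≤ A i j := fun i j => by
    rcases hentries i j with h | h <;> simp [h]
  have hL : ∀ v i, L.mulVec v i = ∑ j, A i j * (v i - v j) := by
    rw [hLdef]; exact laplacian_mulVec_apply A hdiag
  have hone : L.mulVec (fun _ => (1 : ℝ)) = 0 := by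
    funext i; simp [hL]
  refine ⟨hone, ?_, ?_⟩
  · have hspan := maxGenEigenspace_zero_eq_span (Matrix.toLin' L) (fun _ => (1 : ℝ))
      (by rw [Matrix.toLin'_apply, hone]) (by
        intro v c hv
        rw [Matrix.toLin'_apply] at hv
        obtain ⟨hc, hconst⟩ := eq_const_of_laplacian_const A hA r hr v c (fun i => by
          rw [← hL, hv]; simp)
        refine ⟨by rw [Matrix.toLin'_apply, hv, hc, zero_smul], ?_⟩
        refine Submodule.mem_span_singleton.2 ⟨v r, ?_⟩
        funext i
        simp [hconst i])
    have hrank := LinearMap.finrank_maxGenEigenspace_eq (Matrix.toLin' L) (0 : ℝ)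
    rw [hspan, finrank_span_singleton (fun h => one_ne_zero (congrFun h r)),
      Matrix.charpoly_toLin'] at hrank
    rw [hrank, Polynomial.eq_rootMultiplicity_map (algebraMap ℝ ℂ).injective, map_zero]
  · intro μ hμ hμ0
    have hev : Module.End.HasEigenvalue (Matrix.toLin' (L.map (algebraMap ℝ ℂ))) μ := by
      rw [Module.End.hasEigenvalue_iff_isRoot_charpoly, Matrix.charpoly_toLin',
        Matrix.charpoly_map, Polynomial.IsRoot, Polynomial.eval_map_algebraMap, hμ]
    obtain ⟨k, hk⟩ := eigenvalue_mem_ball hev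
    refine re_pos_of_norm_sub_le (d := ∑ j ∈ Finset.univ.erase k, A k j) hμ0
      (Finset.sum_nonneg fun j _ => hA k j) ?_
    have hdiagL : L k k = ∑ j ∈ Finset.univ.erase k, A k j := by
      rw [hLdef, Matrix.sub_apply, Matrix.diagonal_apply_eq, hdiag, sub_zero]
    have hrad : ∑ j ∈ Finset.univ.erase k, ‖(L.map (algebraMap ℝ ℂ)) k j‖ =
        ∑ j ∈ Finset.univ.erase k, A k j := by
      refine Finset.sum_congr rfl fun j hj => ?_
      rw [hLdef, Matrix.map_apply, Matrix.sub_apply,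
        Matrix.diagonal_apply_ne _ (Finset.ne_of_mem_erase hj).symm]
      simp [abs_of_nonneg (hA k j)]
    rw [hrad, mem_closedBall_iff_norm, Matrix.map_apply, hdiagL] at hk
    exact hk
end

section
/- Let n ≥ 2, let 𝒜 be a real n×n adjacency matrix with zero diagonal and entries in {0,1} whose digraph contains a directed spanning tree, let L = Δ − 𝒜 be the associated Laplacian, and let Q be a coordination matrix of size n. Then every complex eigenvalue of L̄ := Q·L·Qᵀ has strictly positive real part; in particular, −L̄ is Hurwitz, so the linear system φ̇ = −L̄φ is asymptotically stable. -/
/-!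
Let `v ≠ 0` be a complex eigenvector of `Q L Qᵀ` for `μ`, and put `w = Qᵀ v`. Since
`Qᵀ Q = 1 - 𝟙𝟙ᵀ / n` (`transpose_mul_self_apply`), the vector `w` satisfies `L w = μ w + c 𝟙` for
some scalar `c`, and `w` is not constant, because `Q 𝟙 = 0` while `Q w = v ≠ 0`.

* If `μ ≠ 0`, the shift `u = w + (c / μ) 𝟙` is a nonzero eigenvector of `L` for `μ`. At an
  index `i` where `‖u i‖` is largest, Gershgorin's estimate gives `‖d - μ‖ ≤ d` with `d` the `i`-th
  row sum of the adjacency matrix, and the punctured disc lies in the open right half-plane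
  (`re_pos_of_eigen`).
* If `μ = 0`, the real and imaginary parts of `w` are mapped by `L` to constant vectors. Comparing
  a maximum with a minimum shows that these constants vanish, and the maximum
  principle propagates both extreme values along the edges to the root, so that `w` is constant
  (`const_of_laplacian_const`), a contradiction.
-/

open Matrix in
/-- `Q` stacked on the row `𝟙ᵀ` is a square matrix with right inverse `[Qᵀ, 𝟙 / n]`; that this is
also a left inverse says that `Qᵀ Q` is the projection orthogonal to `𝟙`. -/
lemma transpose_mul_self_apply (n : ℕ) (hn : 2 ≤ n) (Q : Matrix (Fin (n - 1)) (Fin n) ℝ)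
    (hQ1 : Q.mulVec (fun _ => (1 : ℝ)) = 0) (hQ2 : Q * Q.transpose = 1) (i j : Fin n) :
    (Q.transpose * Q) i j = (if i = j then 1 else 0) - 1 / (n : ℝ) := by
  have hn0 : (n : ℝ) ≠ 0 := by
    have : n ≠ 0 := by omega
    exact_mod_cast this
  have hrow : ∀ k, ∑ j, Q k j = 0 := by
    intro k
    simpa [mulVec, dotProduct] using congrFun hQ1 k
  let R : Matrix Unit (Fin n) ℝ := Matrix.of fun _ _ => 1
  let C : Matrix (Fin n) Unit ℝ := Matrix.of fun _ _ => 1 / (n : ℝ)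
  have e : Fin (n - 1) ⊕ Unit ≃ Fin n := Fintype.equivOfCardEq (by simp; omega)
  have h1 : fromRows Q R * fromCols Q.transpose C = 1 := by
    rw [fromRows_mul_fromCols, hQ2, ← fromBlocks_one]
    congr 1
    · ext k u
      simp [C, mul_apply, ← Finset.sum_mul, hrow]
    · ext u k
      simp [R, mul_apply, hrow]
    · ext u u'
      simp [R, C, mul_apply, hn0]
  have h2 := (mul_eq_one_comm_of_equiv e).1 h1
  rw [fromCols_mul_fromRows] at h2
  have h3 := congrFun (congrFun h2 i) j
  have h4 : (C * R) i j = 1 / (n : ℝ) := by simp [C, R, mul_apply]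
  rw [Matrix.add_apply, h4, Matrix.one_apply] at h3
  linarith

/-- Maximum principle: a maximum of a function with zero Laplacian spreads along edges. -/
lemma eq_of_harmonic {n : ℕ} (A : Matrix (Fin n) (Fin n) ℝ) (hA : ∀ i j, 0 ≤ A i j)
    (x : Fin n → ℝ) (hx : ∀ i, ∑ j, A i j * (x i - x j) = 0) (i : Fin n) (hi : ∀ j, x j ≤ x i)
    (s : ℕ) (p : ℕ → Fin n) (h0 : p 0 = i) (hp : ∀ k < s, A (p k) (p (k + 1)) = 1) :
    x (p s) = x i := by
  have key : ∀ k ≤ s, x (p k) = x i := by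
    intro k
    induction k with
    | zero => intro _; rw [h0]
    | succ k ih =>
      intro hk
      have hk' := ih (by omega)
      have hz := (Finset.sum_eq_zero_iff_of_nonneg (fun j _ =>
        mul_nonneg (hA (p k) j) (by linarith [hi j]))).1 (hx (p k)) (p (k + 1)) (Finset.mem_univ _)
      rw [hp k (by omega)] at hz
      linarith
  exact key s le_rfl

/-- A real function whose Laplacian is a constant is itself constant when every vertex has a path to
`r`: a maximum and a minimum force the constant Laplacian to be zero, and both extreme values
spread to `r`. -/
lemma const_of_laplacian_const {n : ℕ} (A : Matrix (Fin n) (Fin n) ℝ) (hA : ∀ i j, 0 ≤ A i j)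
    (r : Fin n) (htree : ∀ i : Fin n, ∃ s : ℕ, ∃ p : ℕ → Fin n,
      p 0 = i ∧ p s = r ∧ ∀ k < s, A (p k) (p (k + 1)) = 1)
    (x : Fin n → ℝ) (c : ℝ) (hx : ∀ i, ∑ j, A i j * (x i - x j) = c) (i : Fin n) :
    x i = x r := by
  have : Nonempty (Fin n) := ⟨r⟩
  obtain ⟨a, ha⟩ := Finite.exists_max x
  obtain ⟨b, hb⟩ := Finite.exists_min x
  have hc0 : 0 ≤ c := by
    rw [← hx a]
    exact Finset.sum_nonneg fun j _ => mul_nonneg (hA a j) (by linarith [ha j])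
  have hc1 : c ≤ 0 := by
    rw [← hx b]
    exact Finset.sum_nonpos fun j _ =>
      mul_nonpos_of_nonneg_of_nonpos (hA b j) (by linarith [hb j])
  obtain rfl : c = 0 := le_antisymm hc1 hc0
  obtain ⟨s, p, h0, hs, hp⟩ := htree a
  have har := eq_of_harmonic A hA x hx a ha s p h0 hp
  obtain ⟨t, q, g0, gt, hq⟩ := htree b
  have hneg : ∀ i, ∑ j, A i j * (-x i - -x j) = 0 := by
    intro i
    rw [← neg_eq_zero, ← Finset.sum_neg_distrib, ← hx i]
    exact Finset.sum_congr rfl fun j _ => by ring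
  have hbr := eq_of_harmonic A hA (fun i => -x i) hneg b (fun j => by simpa using hb j) t q g0 hq
  rw [hs] at har
  rw [gt] at hbr
  linarith [ha i, hb i]

/-- Gershgorin's estimate: nonzero eigenvalues of a Laplacian lie in the open right half-plane. -/
lemma re_pos_of_eigen {n : ℕ} (A : Matrix (Fin n) (Fin n) ℝ) (hA : ∀ i j, 0 ≤ A i j)
    (u : Fin n → ℂ) (μ : ℂ) (hμ : μ ≠ 0) (k : Fin n) (hk : u k ≠ 0)
    (hu : ∀ i, ∑ j, (A i j : ℂ) * (u i - u j) = μ * u i) : 0 < μ.re := by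
  have : Nonempty (Fin n) := ⟨k⟩
  obtain ⟨i, hi⟩ := Finite.exists_max fun j => ‖u j‖
  have hpos : 0 < ‖u i‖ := lt_of_lt_of_le (norm_pos_iff.2 hk) (hi k)
  set d : ℝ := ∑ j, A i j with hd
  have h1 : ((d : ℂ) - μ) * u i = ∑ j, (A i j : ℂ) * u j := by
    have := hu i
    simp only [mul_sub, Finset.sum_sub_distrib, ← Finset.sum_mul] at this
    rw [hd]
    push_cast
    linear_combination this
  have h2 : ‖(d : ℂ) - μ‖ * ‖u i‖ ≤ d * ‖u i‖ := by
    rw [← norm_mul, h1, hd, Finset.sum_mul]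
    refine norm_sum_le_of_le _ fun j _ => ?_
    rw [norm_mul, Complex.norm_real, Real.norm_of_nonneg (hA i j)]
    exact mul_le_mul_of_nonneg_left (hi j) (hA i j)
  have h3 : ‖(d : ℂ) - μ‖ ≤ d := le_of_mul_le_mul_right h2 hpos
  have h4 : ‖(d : ℂ) - μ‖ ^ 2 ≤ d ^ 2 := pow_le_pow_left₀ (norm_nonneg _) h3 2
  rw [← Complex.normSq_eq_norm_sq, Complex.normSq_apply] at h4
  simp only [Complex.sub_re, Complex.ofReal_re, Complex.sub_im, Complex.ofReal_im] at h4
  have h5 : 0 < μ.re * μ.re + μ.im * μ.im := by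
    rw [← Complex.normSq_apply]
    exact Complex.normSq_pos.2 hμ
  have hd0 : 0 ≤ d := Finset.sum_nonneg fun j _ => hA i j
  by_contra! hre
  nlinarith [mul_nonneg hd0 (neg_nonneg.2 hre)]

lemma exists_eigenvector {m : ℕ} (M : Matrix (Fin m) (Fin m) ℝ) (μ : ℂ)
    (h : Polynomial.aeval μ M.charpoly = 0) :
    ∃ v : Fin m → ℂ, v ≠ 0 ∧ (M.map (algebraMap ℝ ℂ)).mulVec v = μ • v := by
  rw [Polynomial.aeval_def, ← Polynomial.eval_map, ← Matrix.charpoly_map,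
    Matrix.eval_charpoly] at h
  obtain ⟨v, hv, hv'⟩ := Matrix.exists_mulVec_eq_zero_iff.2 h
  refine ⟨v, hv, ?_⟩
  rw [Matrix.sub_mulVec, sub_eq_zero] at hv'
  rw [← hv']
  ext i
  simp [Matrix.scalar_apply, Matrix.mulVec_diagonal]

open Matrix in
lemma re_pos_of_reduced_eigen (n : ℕ) (hn : 2 ≤ n)
    (A : Matrix (Fin n) (Fin n) ℝ) (hdiag : ∀ i, A i i = 0) (hA : ∀ i j, 0 ≤ A i j)
    (r : Fin n) (htree : ∀ i : Fin n, ∃ s : ℕ, ∃ p : ℕ → Fin n,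
      p 0 = i ∧ p s = r ∧ ∀ k < s, A (p k) (p (k + 1)) = 1)
    (L : Matrix (Fin n) (Fin n) ℝ)
    (hLdef : L = Matrix.diagonal (fun i => ∑ j ∈ Finset.univ.erase i, A i j) - A)
    (Q : Matrix (Fin (n - 1)) (Fin n) ℝ)
    (hQ1 : Q.mulVec (fun _ => (1 : ℝ)) = 0)
    (hQ2 : Q * Q.transpose = 1) (μ : ℂ) (v : Fin (n - 1) → ℂ) (hv : v ≠ 0)
    (h : ((Q * L * Q.transpose).map (algebraMap ℝ ℂ)).mulVec v = μ • v) : 0 < μ.re := by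
  set f := algebraMap ℝ ℂ with hf
  set w : Fin n → ℂ := (Q.transpose.map f).mulVec v with hw
  have hQw : (Q.map f).mulVec w = v := by
    rw [hw, mulVec_mulVec, ← Matrix.map_mul, hQ2]
    simp
  have hnonconst : ∀ a : ℂ, ¬ ∀ i, w i = a := by
    intro a ha
    apply hv
    rw [← hQw]
    ext k
    have hrow : ∑ j, Q k j = 0 := by
      simpa [mulVec, dotProduct] using congrFun hQ1 k
    simp only [mulVec, dotProduct, ha, ← Finset.sum_mul, Matrix.map_apply, ← map_sum, hrow]
    simp
  have hL : ∀ i, (L.map f).mulVec w i = ∑ j, (A i j : ℂ) * (w i - w j) := by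
    intro i
    have hs : ∑ j ∈ Finset.univ.erase i, A i j = ∑ j, A i j :=
      Finset.sum_erase _ (hdiag i)
    rw [hLdef, Matrix.map_sub f (map_sub f), sub_mulVec, Matrix.diagonal_map (map_zero f)]
    simp only [Pi.sub_apply, mulVec_diagonal, hs, mul_sub,
      Finset.sum_sub_distrib, ← Finset.sum_mul]
    simp [hf, mulVec, dotProduct]
  obtain ⟨c, hc⟩ : ∃ c : ℂ, ∀ i, ∑ j, (A i j : ℂ) * (w i - w j) = μ * w i + c := by
    have h1 : ((Q.transpose * Q).map f).mulVec ((L.map f).mulVec w) = μ • w := by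
      rw [hw, ← mulVec_smul, ← h]
      simp only [mulVec_mulVec, ← Matrix.map_mul, Matrix.mul_assoc]
    refine ⟨(1 / (n : ℂ)) * ∑ j, (L.map f).mulVec w j, fun i => ?_⟩
    have h2 := congrFun h1 i
    rw [mulVec, dotProduct] at h2
    simp only [Matrix.map_apply, transpose_mul_self_apply n hn Q hQ1 hQ2, map_sub, sub_mul,
      Finset.sum_sub_distrib, ← Finset.mul_sum] at h2
    rw [← hL i]
    have h3 : ∑ j, f (if i = j then 1 else 0) * (L.map f).mulVec w j = (L.map f).mulVec w i := by
      simp [apply_ite f]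
    have h4 : f (1 / (n : ℝ)) = 1 / (n : ℂ) := by simp
    rw [h3, h4, Pi.smul_apply, smul_eq_mul] at h2
    linear_combination h2
  by_cases hμ : μ = 0
  · exfalso
    subst hμ
    have hre := const_of_laplacian_const A hA r htree (fun i => (w i).re) c.re (fun i => by
      simpa using congrArg Complex.re (hc i))
    have him := const_of_laplacian_const A hA r htree (fun i => (w i).im) c.im (fun i => by
      simpa using congrArg Complex.im (hc i))
    exact hnonconst (w r) fun i => Complex.ext (hre i) (him i)
  · obtain ⟨k, hk⟩ := not_forall.1 (hnonconst (-(c / μ)))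
    refine re_pos_of_eigen A hA (fun i => w i + c / μ) μ hμ k
      (fun h0 => hk (eq_neg_of_add_eq_zero_left h0)) fun i => ?_
    simp only [add_sub_add_right_eq_sub]
    rw [hc i]
    field_simp

/-- If the digraph of the adjacency matrix `𝒜` contains a directed
spanning tree, `L = Δ - 𝒜` is the Laplacian and `Q` is a coordination matrix, then every
complex eigenvalue of `L̄ = Q L Qᵀ` has strictly positive real part; in particular `-L̄`
is Hurwitz (all of its complex eigenvalues have strictly negative real part). -/
theorem reduced_laplacian_is_antiHurwitz (n : ℕ) (hn : 2 ≤ n)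
    (A : Matrix (Fin n) (Fin n) ℝ)
    (hdiag : ∀ i, A i i = 0)
    (hentries : ∀ i j, A i j = 0 ∨ A i j = 1)
    (htree : ∃ r : Fin n, ∀ i : Fin n, ∃ s : ℕ, ∃ p : ℕ → Fin n,
      p 0 = i ∧ p s = r ∧ ∀ k < s, A (p k) (p (k + 1)) = 1)
    (L : Matrix (Fin n) (Fin n) ℝ)
    (hLdef : L = Matrix.diagonal (fun i => ∑ j ∈ Finset.univ.erase i, A i j) - A)
    (Q : Matrix (Fin (n - 1)) (Fin n) ℝ)
    (hQ1 : Q.mulVec (fun _ => (1 : ℝ)) = 0)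
    (hQ2 : Q * Q.transpose = 1) :
    (∀ μ : ℂ, Polynomial.aeval μ (Q * L * Q.transpose).charpoly = 0 → 0 < μ.re) ∧
    (∀ μ : ℂ, Polynomial.aeval μ (-(Q * L * Q.transpose)).charpoly = 0 → μ.re < 0) := by
  obtain ⟨r, hr⟩ := htree
  have hA : ∀ i j, 0 ≤ A i j := fun i j => by
    rcases hentries i j with h | h <;> simp [h]
  refine ⟨fun μ hμ => ?_, fun μ hμ => ?_⟩
  · obtain ⟨v, hv, h⟩ := exists_eigenvector _ μ hμ
    exact re_pos_of_reduced_eigen n hn A hdiag hA r hr L hLdef Q hQ1 hQ2 μ v hv h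
  · obtain ⟨v, hv, h⟩ := exists_eigenvector _ μ hμ
    have := re_pos_of_reduced_eigen n hn A hdiag hA r hr L hLdef Q hQ1 hQ2 (-μ) v hv (by
      rw [neg_smul, ← h, ← Matrix.neg_mulVec]
      congr 1
      ext i j
      simp)
    simpa using this
end

section
/- Let M be a real m×m matrix all of whose complex eigenvalues have strictly positive real part (equivalently, −M is Hurwitz). Then for every symmetric positive definite real m×m matrix Ξ, there exists a symmetric positive definite real m×m matrix Ψ such that Mᵀ·Ψ + Ψ·M = Ξ (equivalently, (−M)ᵀΨ + Ψ(−M) = −Ξ, the Lyapunov equation). -/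
/-!
The proof passes to discrete time by the Cayley transform `C = (M - 1) * (M + 1)⁻¹`. The map
`μ ↦ (μ - 1) / (μ + 1)` sends the right half-plane into the unit disc, so the complex spectrum of
`C` lies in the open unit disc (`norm_lt_one_of_mem_spectrum_cayley`), and by Gelfand's formula the
powers of `C` decay geometrically (`exists_norm_pow_le`). Hence, for every positive definite `Q`,
the series `Ψ = ∑ (Cᵀ)ᵏ Q Cᵏ` converges to a positive definite solution of the Stein equation
`Ψ = Q + Cᵀ Ψ C` (`exists_posDef_stein`).

Multiplying the Stein equation by `(M + 1)ᵀ` on the left and by `M + 1` on the right gives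
`(M + 1)ᵀ Ψ (M + 1) = (M + 1)ᵀ Q (M + 1) + (M - 1)ᵀ Ψ (M - 1)`, that is
`2 (Mᵀ Ψ + Ψ M) = (M + 1)ᵀ Q (M + 1)`. The choice `Q = 2 (M + 1)⁻ᵀ Ξ (M + 1)⁻¹` turns this into the
Lyapunov equation with right-hand side `Ξ`.
-/

section Lyapunov

open Filter Topology
open scoped ENNReal NNReal Matrix Matrix.Norms.Frobenius

/-- The Cayley transform maps the right half-plane into the unit disc, at the level of spectra: the
hypothesis `hC` says that `C = (A - 1) * (A + 1)⁻¹`. -/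
lemma norm_lt_one_of_mem_spectrum_cayley {m : ℕ} {A C : Matrix (Fin m) (Fin m) ℂ}
    (hA : ∀ μ ∈ spectrum ℂ A, 0 < μ.re) (hC : C * (A + 1) = A - 1) (hU : IsUnit (A + 1))
    {l : ℂ} (hl : l ∈ spectrum ℂ C) : ‖l‖ < 1 := by
  by_contra! h
  rw [spectrum.mem_iff] at hl
  apply hl
  rw [← hU.mul_right_iff]
  have e : (algebraMap ℂ (Matrix (Fin m) (Fin m) ℂ) l - C) * (A + 1) = (l + 1) • 1 - (1 - l) • A := by
    rw [sub_mul, hC, Algebra.algebraMap_eq_smul_one]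
    simp only [smul_mul_assoc, one_mul]
    module
  rw [e]
  by_cases h1 : l = 1
  · subst h1
    have : ((1 : ℂ) + 1) • (1 : Matrix (Fin m) (Fin m) ℂ) - ((1 : ℂ) - 1) • A
        = (Units.mk0 (2 : ℂ) two_ne_zero) • 1 := by
      rw [Units.smul_mk0]; norm_num
    rw [this]
    exact isUnit_one.smul _
  · have h2 : 1 - l ≠ 0 := sub_ne_zero.mpr (Ne.symm h1)
    -- Outside the open disc, the preimage `(1 + l) / (1 - l)` has nonpositive real part.
    have hns : (l + 1) / (1 - l) ∉ spectrum ℂ A := by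
      intro hm
      have := hA _ hm
      rw [Complex.div_re, ← add_div] at this
      have hpos : 0 < Complex.normSq (1 - l) := Complex.normSq_pos.mpr h2
      rw [div_pos_iff_of_pos_right hpos] at this
      have hn : 1 ≤ Complex.normSq l := by
        rw [Complex.normSq_eq_norm_sq]; nlinarith
      rw [Complex.normSq_apply] at hn
      simp at this
      nlinarith
    rw [spectrum.notMem_iff] at hns
    have : (l + 1) • (1 : Matrix (Fin m) (Fin m) ℂ) - (1 - l) • A
        = (Units.mk0 (1 - l) h2) •
          (algebraMap ℂ (Matrix (Fin m) (Fin m) ℂ) ((l + 1) / (1 - l)) - A) := by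
      rw [Units.smul_mk0, smul_sub, Algebra.algebraMap_eq_smul_one, smul_smul, mul_div_cancel₀ _ h2]
    rw [this]
    exact hns.smul _

/-- Gelfand's formula: the powers of a matrix with spectrum in the open unit disc decay
geometrically. -/
lemma exists_norm_pow_le {m : ℕ} {C : Matrix (Fin m) (Fin m) ℂ}
    (hC : ∀ l ∈ spectrum ℂ C, ‖l‖ < 1) :
    ∃ r : ℝ, 0 ≤ r ∧ r < 1 ∧ ∀ᶠ n in atTop, ‖C ^ n‖ ≤ r ^ n := by
  have hs : spectralRadius ℂ C < (1 : ℝ≥0) := by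
    rcases (spectrum ℂ C).eq_empty_or_nonempty with h | h
    · simp [spectralRadius, h]
    · exact spectrum.spectralRadius_lt_of_forall_lt_of_nonempty h fun k hk => by
        exact_mod_cast hC k hk
  obtain ⟨r, hr1, hr2⟩ := ENNReal.lt_iff_exists_nnreal_btwn.mp hs
  refine ⟨r, r.2, by exact_mod_cast hr2, ?_⟩
  have ht := spectrum.pow_nnnorm_pow_one_div_tendsto_nhds_spectralRadius C
  filter_upwards [ht.eventually (gt_mem_nhds hr1), eventually_gt_atTop 0] with n hn hn0
  have hn0' : (0 : ℝ) < n := by exact_mod_cast hn0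
  rw [one_div, ENNReal.rpow_inv_lt_iff hn0', ENNReal.rpow_natCast] at hn
  exact_mod_cast hn.le

/-- If the powers of `C` decay geometrically, then `∑ (Cᵀ)ᵏ Q Cᵏ` is a positive definite solution of
the Stein equation. -/
lemma exists_posDef_stein {m : ℕ} {C Q : Matrix (Fin m) (Fin m) ℝ} {r : ℝ} (h0 : 0 ≤ r)
    (h1 : r < 1) (hC : ∀ᶠ n in atTop, ‖C ^ n‖ ≤ r ^ n) (hQ : Q.PosDef) :
    ∃ P : Matrix (Fin m) (Fin m) ℝ, P.PosDef ∧ P = Q + Cᵀ * P * C := by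
  set f : ℕ → Matrix (Fin m) (Fin m) ℝ := fun n => (C ^ n)ᵀ * Q * C ^ n with hf
  have hsum : Summable f := by
    have hg : Summable fun n : ℕ => ‖Q‖ * (r * r) ^ n :=
      (summable_geometric_of_lt_one (by positivity) (by nlinarith)).mul_left _
    refine hg.of_norm_bounded_eventually_nat ?_
    filter_upwards [hC] with n hn
    calc ‖f n‖ ≤ ‖(C ^ n)ᵀ‖ * ‖Q‖ * ‖C ^ n‖ :=
          (norm_mul_le _ _).trans (by gcongr; exact norm_mul_le _ _)
      _ = ‖C ^ n‖ * ‖Q‖ * ‖C ^ n‖ := by rw [Matrix.frobenius_norm_transpose]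
      _ ≤ r ^ n * ‖Q‖ * r ^ n := by gcongr
      _ = ‖Q‖ * (r * r) ^ n := by rw [mul_pow]; ring
  have hpsd : ∀ n, (f n).PosSemidef := fun n => by
    simpa [hf] using hQ.posSemidef.conjTranspose_mul_mul_same (C ^ n)
  have hP : (∑' n, f n).PosSemidef := by
    refine Matrix.PosSemidef.of_dotProduct_mulVec_nonneg ?_ fun x => ?_
    · rw [Matrix.IsHermitian, Matrix.conjTranspose_tsum]
      exact tsum_congr fun n => (hpsd n).isHermitian
    · have hc : Continuous fun A : Matrix (Fin m) (Fin m) ℝ => star x ⬝ᵥ (A *ᵥ x) := by fun_prop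
      let φ : Matrix (Fin m) (Fin m) ℝ →+ ℝ :=
        { toFun := fun A => star x ⬝ᵥ (A *ᵥ x)
          map_zero' := by simp
          map_add' := fun A B => by rw [Matrix.add_mulVec, dotProduct_add] }
      exact (hsum.hasSum.map φ hc).nonneg fun n => (hpsd n).dotProduct_mulVec_nonneg x
  have hfix : ∑' n, f n = Q + Cᵀ * (∑' n, f n) * C := by
    rw [← hsum.tsum_mul_left, ← (hsum.mul_left _).tsum_mul_right, hsum.tsum_eq_zero_add]
    congr 1
    · simp [hf]
    · refine tsum_congr fun n => ?_
      simp only [hf, pow_succ, Matrix.transpose_mul, mul_assoc]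
  refine ⟨_, ?_, hfix⟩
  rw [hfix]
  exact hQ.add_posSemidef (by simpa using hP.conjTranspose_mul_mul_same C)

end Lyapunov

open scoped Matrix


/-- If all complex eigenvalues of the real matrix `M` have strictly
positive real part (i.e. `-M` is Hurwitz), then for every symmetric positive definite `Ξ`
there is a symmetric positive definite `Ψ` solving the Lyapunov equation
`Mᵀ Ψ + Ψ M = Ξ`. -/
theorem lyapunov_equation_solvable (m : ℕ) (M : Matrix (Fin m) (Fin m) ℝ)
    (hM : ∀ μ : ℂ, Polynomial.aeval μ M.charpoly = 0 → 0 < μ.re) :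
    ∀ Ξ : Matrix (Fin m) (Fin m) ℝ, Ξ.PosDef →
      ∃ Ψ : Matrix (Fin m) (Fin m) ℝ, Ψ.PosDef ∧ M.transpose * Ψ + Ψ * M = Ξ := by
  intro Ξ hΞ
  let ι : ℝ →+* ℂ := Complex.ofRealHom
  have hA : ∀ μ ∈ spectrum ℂ (M.map ι), 0 < μ.re := fun μ hμ => hM μ (by
    rw [Matrix.mem_spectrum_iff_isRoot_charpoly, Matrix.charpoly_map] at hμ
    rwa [Polynomial.IsRoot, Polynomial.eval_map] at hμ)
  have hmap : (M + 1).map ι = M.map ι + 1 := by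
    rw [Matrix.map_add ι (map_add ι), Matrix.map_one ι (map_zero ι) (map_one ι)]
  have hmap' : (M - 1).map ι = M.map ι - 1 := by
    rw [Matrix.map_sub ι (map_sub ι), Matrix.map_one ι (map_zero ι) (map_one ι)]
  -- `M + 1` is invertible because `-1` lies outside the right half-plane.
  have hUc : IsUnit (M.map ι + 1) := by
    have : (-1 : ℂ) ∉ spectrum ℂ (M.map ι) := fun h => by
      have := hA _ h
      norm_num at this
    rw [spectrum.notMem_iff] at this
    rw [← IsUnit.neg_iff]
    convert this using 1
    simp
    abel
  have hdet : IsUnit (M + 1).det := by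
    rw [Matrix.isUnit_iff_isUnit_det, ← hmap, ← RingHom.mapMatrix_apply, ← RingHom.map_det,
      isUnit_iff_ne_zero] at hUc
    exact isUnit_iff_ne_zero.mpr fun h => hUc (by rw [h, map_zero])
  set W := (M + 1)⁻¹ with hW
  have hWl : W * (M + 1) = 1 := Matrix.nonsing_inv_mul _ hdet
  set C := (M - 1) * W with hC
  have hCM : C * (M + 1) = M - 1 := by rw [hC, mul_assoc, hWl, mul_one]
  obtain ⟨r, h0, h1, hr⟩ := exists_norm_pow_le (C := C.map ι) fun l hl =>
    norm_lt_one_of_mem_spectrum_cayley hA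
      (by rw [← hmap, ← hmap', ← Matrix.map_mul, hCM]) hUc hl
  have hQ : (Wᵀ * ((2 : ℝ) • Ξ) * W).PosDef := by
    have hinj : Function.Injective W.mulVec := Matrix.mulVec_injective_of_isUnit
      ((Matrix.isUnit_iff_isUnit_det _).mpr (Matrix.isUnit_nonsing_inv_det _ hdet))
    simpa using (hΞ.smul (two_pos : (0 : ℝ) < 2)).conjTranspose_mul_mul_same hinj
  obtain ⟨P, hP, hPe⟩ := exists_posDef_stein h0 h1 (C := C) (by
    filter_upwards [hr] with n hn
    rw [← Matrix.map_pow, Matrix.frobenius_norm_map_eq _ _ (by simp [ι])] at hn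
    exact hn) hQ
  refine ⟨P, hP, ?_⟩
  have hWt : (M + 1)ᵀ * Wᵀ = 1 := by rw [← Matrix.transpose_mul, hWl, Matrix.transpose_one]
  have hCt : (M + 1)ᵀ * Cᵀ = (M - 1)ᵀ := by rw [← Matrix.transpose_mul, hCM]
  have key : (M + 1)ᵀ * P * (M + 1) = (2 : ℝ) • Ξ + (M - 1)ᵀ * P * (M - 1) := by
    calc (M + 1)ᵀ * P * (M + 1)
        = (M + 1)ᵀ * (Wᵀ * ((2 : ℝ) • Ξ) * W + Cᵀ * P * C) * (M + 1) := by rw [← hPe]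
      _ = ((M + 1)ᵀ * Wᵀ) * ((2 : ℝ) • Ξ) * (W * (M + 1))
          + ((M + 1)ᵀ * Cᵀ) * P * (C * (M + 1)) := by noncomm_ring
      _ = _ := by rw [hWt, hCt, hWl, hCM, one_mul, mul_one]
  rw [Matrix.transpose_add, Matrix.transpose_sub, Matrix.transpose_one] at key
  have h2 : (2 : ℝ) • (Mᵀ * P + P * M) = (2 : ℝ) • Ξ := by
    have e : (2 : ℝ) • (Mᵀ * P + P * M)
        = (Mᵀ + 1) * P * (M + 1) - (Mᵀ - 1) * P * (M - 1) := by
      rw [two_smul]; noncomm_ring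
    rw [e, key, add_sub_cancel_right]
  exact smul_right_injective _ (two_ne_zero : (2 : ℝ) ≠ 0) h2
end

section
/- Let a > 0, M > 0, c₁ > 0, and t₀ ≤ T be real numbers, and let f : [t₀, T] → ℝ be a continuous nonnegative function satisfying f(t) ≤ M·(t − t₀) + a·∫_{t₀}^{t} f(s) ds for all t ∈ [t₀, T]. If t₁ ∈ [t₀, T] satisfies f(t₁) ≥ c₁, then t₁ − t₀ ≥ (1/a)·ln(1 + a·c₁/M). In particular, the first time at which f reaches the threshold c₁ is separated from t₀ by a strictly positive amount depending only on a, M, and c₁. -/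
/-!
The right-hand side `G t = M (t - t₀) + a ∫_{t₀}^t f` of the integral inequality satisfies
`G t₀ = 0` and `G' = M + a f ≤ M + a G`, so the differential Grönwall inequality gives
`c₁ ≤ f t₁ ≤ G t₁ ≤ (M / a) (exp (a (t₁ - t₀)) - 1)`; solving for `t₁ - t₀` yields the bound.
-/

/-- Lower bound on inter-event times: if a continuous nonnegative `f`
on `[t₀, T]` satisfies the Gronwall-type inequality `f t ≤ M (t - t₀) + a ∫_{t₀}^t f`
and reaches the threshold `c₁ > 0` at time `t₁`, then
`t₁ - t₀ ≥ (1/a) ln(1 + a c₁ / M)`. -/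
theorem inter_event_time_lower_bound
    (a M c₁ t₀ T : ℝ) (ha : 0 < a) (hM : 0 < M) (hc₁ : 0 < c₁) (hT : t₀ ≤ T)
    (f : ℝ → ℝ)
    (hf_cont : ContinuousOn f (Set.Icc t₀ T))
    (hf_nonneg : ∀ t ∈ Set.Icc t₀ T, 0 ≤ f t)
    (hf_le : ∀ t ∈ Set.Icc t₀ T, f t ≤ M * (t - t₀) + a * ∫ s in t₀..t, f s) :
    ∀ t₁ ∈ Set.Icc t₀ T, c₁ ≤ f t₁ →
      (1 / a) * Real.log (1 + a * c₁ / M) ≤ t₁ - t₀ := by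
  intro t₁ ht₁ hft₁
  -- Extending `f` by constants outside `[t₀, T]` makes its primitive differentiable everywhere,
  -- endpoints included.
  obtain ⟨g, hg, hgf⟩ : ∃ g : ℝ → ℝ, Continuous g ∧ ∀ t ∈ Set.Icc t₀ T, g t = f t :=
    ⟨Set.IccExtend hT ((Set.Icc t₀ T).domRestrict f), hf_cont.domRestrict.Icc_extend',
      fun t ht => Set.IccExtend_of_mem hT _ ht⟩
  set G : ℝ → ℝ := fun t => M * (t - t₀) + a * ∫ s in t₀..t, g s with hG
  have hG_deriv : ∀ t, HasDerivAt G (M + a * g t) t := by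
    intro t
    have h1 : HasDerivAt (fun u => ∫ s in t₀..u, g s) (g t) t :=
      (hg.integral_hasStrictDerivAt t₀ t).hasDerivAt
    have h2 : HasDerivAt (fun u : ℝ => M * (u - t₀)) M t := by
      simpa using ((hasDerivAt_id t).sub_const t₀).const_mul M
    exact h2.add (h1.const_mul a)
  have hfG : ∀ t ∈ Set.Icc t₀ T, f t ≤ G t := by
    intro t ht
    have h : ∫ s in t₀..t, g s = ∫ s in t₀..t, f s := by
      apply intervalIntegral.integral_congr
      intro s hs
      rw [Set.uIcc_of_le ht.1] at hs
      exact hgf s ⟨hs.1, hs.2.trans ht.2⟩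
    simpa only [hG, h] using hf_le t ht
  have hG_bound : G t₁ ≤ M / a * (Real.exp (a * (t₁ - t₀)) - 1) := by
    have h := norm_le_gronwallBound_of_norm_deriv_right_le (f := G) (f' := fun t => M + a * g t)
      (δ := 0) (K := a) (ε := M) (a := t₀) (b := T)
      (fun t _ => (hG_deriv t).continuousAt.continuousWithinAt)
      (fun t _ => (hG_deriv t).hasDerivWithinAt) (by simp [hG])
      (fun t ht => by
        have ht' := Set.Ico_subset_Icc_self ht
        have h0 := hf_nonneg t ht'
        have h1 := hfG t ht'
        rw [hgf t ht', Real.norm_of_nonneg (by positivity), Real.norm_of_nonneg (h0.trans h1)]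
        linarith [mul_le_mul_of_nonneg_left h1 ha.le]) t₁ ht₁
    rw [gronwallBound_of_K_ne_0 ha.ne'] at h
    simpa using (le_abs_self _).trans h
  have hc : c₁ ≤ M / a * (Real.exp (a * (t₁ - t₀)) - 1) :=
    hft₁.trans ((hfG t₁ ht₁).trans hG_bound)
  have hexp : 1 + a * c₁ / M ≤ Real.exp (a * (t₁ - t₀)) := by
    have h : a * c₁ / M ≤ a * (M / a * (Real.exp (a * (t₁ - t₀)) - 1)) / M := by gcongr
    have h' : a * (M / a * (Real.exp (a * (t₁ - t₀)) - 1)) / M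
        = Real.exp (a * (t₁ - t₀)) - 1 := by field_simp
    linarith
  have hlog : Real.log (1 + a * c₁ / M) ≤ a * (t₁ - t₀) :=
    (Real.log_le_iff_le_exp (by positivity)).2 hexp
  rw [one_div, inv_mul_le_iff₀ ha]
  exact hlog
end

section
/- Let A be a nonzero real m×m matrix, B ∈ ℝᵐ, t₀ ≤ T, and ū ≥ 0. Let u : [t₀, T] → ℝ satisfy |u(t)| ≤ ū for all t, and let ε : [t₀, T] → ℝᵐ be a differentiable function satisfying ε(t₀) = 0 and ε′(t) = A·ε(t) + u(t)·B for all t ∈ [t₀, T]. Then ‖ε(t)‖ ≤ (‖B‖·ū/‖A‖)·(e^{‖A‖(t−t₀)} − 1) for all t ∈ [t₀, T], where ‖A‖ denotes the operator norm of A and ‖·‖ the Euclidean norm on ℝᵐ. -/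
/-!
The norm of the right-hand side satisfies `‖A ε + u B‖ ≤ ‖A‖ ‖ε‖ + ‖B‖ ū`, so Grönwall's inequality
with zero initial value (`norm_le_gronwallBound_of_norm_deriv_right_le`) bounds `‖ε t‖` by the
solution of `y' = ‖A‖ y + ‖B‖ ū`, `y t₀ = 0`. Since `‖A‖ ≠ 0`, this solution is the stated one.
-/

/-- Growth bound on the event-triggered estimation error: if
`ε(t₀) = 0`, `ε' = A ε + u B` with `|u| ≤ ū`, then
`‖ε(t)‖ ≤ (‖B‖ ū / ‖A‖) (e^{‖A‖(t - t₀)} - 1)`, where `‖A‖` is the operator norm of `A`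
as a map on Euclidean space and `‖·‖` is the Euclidean norm. -/
theorem estimation_error_growth_bound
    (m : ℕ) (A : Matrix (Fin m) (Fin m) ℝ) (hA : A ≠ 0)
    (B : EuclideanSpace ℝ (Fin m)) (t₀ T : ℝ) (hT : t₀ ≤ T)
    (uBar : ℝ) (huBar : 0 ≤ uBar)
    (u : ℝ → ℝ) (hu : ∀ t ∈ Set.Icc t₀ T, |u t| ≤ uBar)
    (ε : ℝ → EuclideanSpace ℝ (Fin m))
    (hε0 : ε t₀ = 0)
    (hεdyn : ∀ t ∈ Set.Icc t₀ T,
      HasDerivWithinAt ε (Matrix.toEuclideanCLM (𝕜 := ℝ) A (ε t) + u t • B)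
        (Set.Icc t₀ T) t) :
    ∀ t ∈ Set.Icc t₀ T,
      ‖ε t‖ ≤ ‖B‖ * uBar / ‖Matrix.toEuclideanCLM (𝕜 := ℝ) A‖ *
        (Real.exp (‖Matrix.toEuclideanCLM (𝕜 := ℝ) A‖ * (t - t₀)) - 1) := by
  have hK : ‖Matrix.toEuclideanCLM (𝕜 := ℝ) A‖ ≠ 0 := by
    rw [norm_ne_zero_iff]
    exact (map_ne_zero_iff _ (Matrix.toEuclideanCLM (𝕜 := ℝ) (n := Fin m)).injective).mpr hA
  intro t ht
  have h := norm_le_gronwallBound_of_norm_deriv_right_le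
    (f' := fun s => Matrix.toEuclideanCLM (𝕜 := ℝ) A (ε s) + u s • B)
    (δ := 0) (K := ‖Matrix.toEuclideanCLM (𝕜 := ℝ) A‖) (ε := ‖B‖ * uBar)
    (fun s hs => (hεdyn s hs).continuousWithinAt)
    (fun s hs => (hεdyn s (Set.Ico_subset_Icc_self hs)).mono_of_mem_nhdsWithin
      (Icc_mem_nhdsGE_of_mem hs))
    (by simp [hε0])
    (fun s hs => by
      refine (norm_add_le _ _).trans (add_le_add (ContinuousLinearMap.le_opNorm _ _) ?_)
      rw [norm_smul, Real.norm_eq_abs, mul_comm]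
      exact mul_le_mul_of_nonneg_left (hu s (Set.Ico_subset_Icc_self hs)) (norm_nonneg B))
    t ht
  simpa [gronwallBound_of_K_ne_0 hK] using h
end
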